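/- Let n ≥ 3, let α_1, …, α_n ∈ ℝ (indices mod n) satisfy sin(α_{j+1} − α_j) ≠ 0 for all j, let P_θ be the associated perpendicular-bisector evolute matrix, and let C, S ∈ ℝⁿ be the vectors C_j = cos α_j, S_j = sin α_j. Then P_θ·C = −S and P_θ·S = C. In particular the plane span{C, S} ⊂ ℝⁿ is P_θ-invariant and the restriction of P_θ to its complexification has eigenvalues ±i. -/

import Mathlib

open Real

/-- The perpendicular-bisector evolute matrix `P_θ` associated with the cyclic
sequence of normal angles `α`. -/
noncomputable def Pmat (n : ℕ) [NeZero n] (α : Fin n → ℝ) : Matrix (Fin n) (Fin n) ℝ :=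
  Matrix.of fun j k =>
    if k = j then
      (Real.cos (α j - α (j - 1)) / Real.sin (α j - α (j - 1)) -
        Real.cos (α (j + 1) - α j) / Real.sin (α (j + 1) - α j)) / 2
    else if k = j + 1 then 1 / (2 * Real.sin (α (j + 1) - α j))
    else if k = j - 1 then -(1 / (2 * Real.sin (α j - α (j - 1))))
    else 0

theorem Pmat_mulVec_apply (n : ℕ) (hn : 3 ≤ n) [NeZero n] (α v : Fin n → ℝ) (j : Fin n) :
    (Pmat n α).mulVec v j =
      (Real.cos (α j - α (j - 1)) / Real.sin (α j - α (j - 1)) -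
        Real.cos (α (j + 1) - α j) / Real.sin (α (j + 1) - α j)) / 2 * v j
      + 1 / (2 * Real.sin (α (j + 1) - α j)) * v (j + 1)
      + -(1 / (2 * Real.sin (α j - α (j - 1)))) * v (j - 1) := by
  obtain ⟨m, rfl⟩ : ∃ m, n = m + 3 := ⟨n - 3, by omega⟩
  have one_ne : (1 : Fin (m + 3)) ≠ 0 := by
    intro h
    have := congrArg Fin.val h
    simp [Fin.val_one] at this
  have two_ne : (1 : Fin (m + 3)) + 1 ≠ 0 := by
    intro h
    have := congrArg Fin.val h
    simp [Fin.val_add, Fin.val_one] at this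
    rw [Nat.mod_eq_of_lt (by omega)] at this
    omega
  have h1 : j + 1 ≠ j := fun h => one_ne (by simpa using h)
  have h2 : j - 1 ≠ j := fun h => one_ne (by simpa using h)
  have h3 : j - 1 ≠ j + 1 := fun h => two_ne (by
    have h' : j + (1 + 1) = j := by
      rw [← add_assoc, ← h, sub_add_cancel]
    exact add_eq_left.mp h')
  have key : ∀ k, Pmat (m + 3) α j k * v k =
      (if k = j then (Real.cos (α j - α (j - 1)) / Real.sin (α j - α (j - 1)) -
        Real.cos (α (j + 1) - α j) / Real.sin (α (j + 1) - α j)) / 2 * v k else 0)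
      + (if k = j + 1 then 1 / (2 * Real.sin (α (j + 1) - α j)) * v k else 0)
      + (if k = j - 1 then -(1 / (2 * Real.sin (α j - α (j - 1)))) * v k else 0) := by
    intro k
    simp only [Pmat, Matrix.of_apply]
    by_cases a : k = j
    · subst a
      rw [if_pos rfl, if_pos rfl, if_neg h1.symm, if_neg h2.symm]; ring
    · by_cases b : k = j + 1
      · subst b
        rw [if_neg a, if_pos rfl, if_neg a, if_pos rfl, if_neg h3.symm]; ring
      · by_cases c : k = j - 1
        · subst c
          rw [if_neg a, if_neg b, if_pos rfl, if_neg a, if_neg b, if_pos rfl]; ring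
        · simp [a, b, c]
  simp only [Matrix.mulVec, dotProduct]
  rw [Finset.sum_congr rfl (fun k _ => key k)]
  simp only [Finset.sum_add_distrib, Finset.sum_ite_eq', Finset.mem_univ, if_true]

/-- With `C_j = cos α_j`, `S_j = sin α_j`, one has
`P_θ C = −S` and `P_θ S = C`; in particular `span{C,S}` is `P_θ`-invariant and the
complexified restriction has eigenvalues `±i` (eigenvectors `C ± iS`). -/
theorem stmt_10 (n : ℕ) (hn : 3 ≤ n) [NeZero n] (α : Fin n → ℝ)
    (hsin : ∀ j : Fin n, Real.sin (α (j + 1) - α j) ≠ 0)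
    (C S : Fin n → ℝ)
    (hC : ∀ j : Fin n, C j = Real.cos (α j))
    (hS : ∀ j : Fin n, S j = Real.sin (α j)) :
    ((Pmat n α).mulVec C = -S) ∧
    ((Pmat n α).mulVec S = C) ∧
    (∀ p ∈ Submodule.span ℝ ({C, S} : Set (Fin n → ℝ)),
      (Pmat n α).mulVec p ∈ Submodule.span ℝ ({C, S} : Set (Fin n → ℝ))) ∧
    (((Pmat n α).map (Complex.ofReal)).mulVec (fun j => (C j : ℂ) + Complex.I * (S j : ℂ)) =
      Complex.I • fun j => (C j : ℂ) + Complex.I * (S j : ℂ)) ∧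
    (((Pmat n α).map (Complex.ofReal)).mulVec (fun j => (C j : ℂ) - Complex.I * (S j : ℂ)) =
      (-Complex.I) • fun j => (C j : ℂ) - Complex.I * (S j : ℂ)) := by
  have hsin' : ∀ j : Fin n, Real.sin (α j - α (j - 1)) ≠ 0 := by
    intro j
    have := hsin (j - 1)
    rwa [sub_add_cancel] at this
  have hPC : (Pmat n α).mulVec C = -S := by
    funext j
    have e1 : Real.cos (α (j + 1)) = Real.cos (α j + (α (j + 1) - α j)) := by congr 1; ring
    have e2 : Real.cos (α (j - 1)) = Real.cos (α j - (α j - α (j - 1))) := by congr 1; ring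
    rw [Pmat_mulVec_apply n hn, hC, hC, hC, Pi.neg_apply, hS, e1, e2, Real.cos_add (α j),
      Real.cos_sub (α j) (α j - α (j - 1))]
    have a := hsin j
    have b := hsin' j
    generalize α (j + 1) - α j = t at *
    generalize α j - α (j - 1) = s at *
    field_simp
    ring
  have hPS : (Pmat n α).mulVec S = C := by
    funext j
    have e1 : Real.sin (α (j + 1)) = Real.sin (α j + (α (j + 1) - α j)) := by congr 1; ring
    have e2 : Real.sin (α (j - 1)) = Real.sin (α j - (α j - α (j - 1))) := by congr 1; ring
    rw [Pmat_mulVec_apply n hn, hS, hS, hS, hC, e1, e2, Real.sin_add (α j),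
      Real.sin_sub (α j) (α j - α (j - 1))]
    have a := hsin j
    have b := hsin' j
    generalize α (j + 1) - α j = t at *
    generalize α j - α (j - 1) = s at *
    field_simp
    ring
  have cC : ∀ j, ∑ k, ((Pmat n α j k : ℝ) : ℂ) * (C k : ℂ) = -(S j : ℂ) := by
    intro j
    have := congrFun hPC j
    simp only [Matrix.mulVec, dotProduct, Pi.neg_apply] at this
    exact_mod_cast this
  have cS : ∀ j, ∑ k, ((Pmat n α j k : ℝ) : ℂ) * (S k : ℂ) = (C j : ℂ) := by
    intro j
    have := congrFun hPS j
    simp only [Matrix.mulVec, dotProduct] at this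
    exact_mod_cast this
  refine ⟨hPC, hPS, ?_, ?_, ?_⟩
  · intro p hp
    obtain ⟨a, b, rfl⟩ := Submodule.mem_span_pair.mp hp
    rw [Matrix.mulVec_add, Matrix.mulVec_smul, Matrix.mulVec_smul, hPC, hPS]
    exact Submodule.mem_span_pair.mpr ⟨b, -a, by simp [add_comm]⟩
  · funext j
    simp only [Matrix.mulVec, dotProduct, Matrix.map_apply, Pi.smul_apply, smul_eq_mul, mul_add,
      Finset.sum_add_distrib, mul_left_comm _ Complex.I, ← Finset.mul_sum, cC, cS]
    linear_combination -(S j : ℂ) * Complex.I_mul_I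
  · funext j
    simp only [Matrix.mulVec, dotProduct, Matrix.map_apply, Pi.smul_apply, smul_eq_mul, mul_sub,
      Finset.sum_sub_distrib, mul_left_comm _ Complex.I, ← Finset.mul_sum, cC, cS]
    linear_combination -(S j : ℂ) * Complex.I_mul_I
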